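/- arXiv:1309.5618 — 9 statements merged into one kernel-verified Lean document; each statement's English description precedes it below -/
import Mathlib

section
/- Let 1 ≤ i < j be integers, L = j − i + 1 and m = ⌊log₂ L⌋. Then Len(ℓ, j) < Len(ℓ+1, j) for all ℓ ≥ 1, Len(2m−1, j) < 2^m ≤ L, and Len(2m+2, j) ≥ 2^{m+1} > L; consequently α(i, j) ∈ {2m−1, 2m, 2m+1}. -/
/-- `Len ℓ j`: for `ℓ = 1` it is `1`; for `ℓ ≥ 2`, with `m = ⌊ℓ/2⌋ - 1`, it is
`2·2^m + (j mod 2^m)` if `ℓ` is even and `3·2^m + (j mod 2^m)` if `ℓ` is odd. -/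
def Len (ℓ j : ℕ) : ℕ :=
  if ℓ = 1 then 1
  else if ℓ % 2 = 0 then 2 * 2 ^ (ℓ / 2 - 1) + j % 2 ^ (ℓ / 2 - 1)
  else 3 * 2 ^ (ℓ / 2 - 1) + j % 2 ^ (ℓ / 2 - 1)

/-!
Appending the parity bit of `ℓ` to a leading `1` gives the coefficient `2` or `3` of the power of
two in `Len ℓ j`, and the remainder never carries. So `Len ℓ j` has exactly `⌊ℓ/2⌋ + 1` binary
digits, i.e. `2^⌊ℓ/2⌋ ≤ Len ℓ j < 2^(⌊ℓ/2⌋ + 1)` for `ℓ ≥ 1`. Comparing binary lengths with those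
of `L` settles everything except the increase from an even `ℓ` to `ℓ + 1`, where both values lie in
the same dyadic block and only the coefficient changes.
-/

theorem len_one (j : ℕ) : Len 1 j = 1 := rfl

theorem len_add_two (ℓ j : ℕ) :
    Len (ℓ + 2) j = (2 + ℓ % 2) * 2 ^ (ℓ / 2) + j % 2 ^ (ℓ / 2) := by
  rcases Nat.mod_two_eq_zero_or_one ℓ with even | odd
  · simp [Len, even]
  · simp [Len, odd]

theorem two_pow_half_le_len (ℓ j : ℕ) : 2 ^ (ℓ / 2) ≤ Len ℓ j := by
  match ℓ with
  | 0 => simp [Len, Nat.mod_one]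
  | 1 => simp [len_one]
  | ℓ + 2 =>
    calc 2 ^ ((ℓ + 2) / 2) = 2 * 2 ^ (ℓ / 2) := by
          rw [Nat.add_div_right ℓ two_pos, pow_succ']
      _ ≤ (2 + ℓ % 2) * 2 ^ (ℓ / 2) := by gcongr; exact Nat.le_add_right _ _
      _ ≤ Len (ℓ + 2) j := by rw [len_add_two]; exact Nat.le_add_right _ _

theorem len_lt_two_pow_half_add_one {ℓ : ℕ} (hℓ : 1 ≤ ℓ) (j : ℕ) :
    Len ℓ j < 2 ^ (ℓ / 2 + 1) := by
  match ℓ with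
  | 1 => simp [len_one]
  | ℓ + 2 =>
    calc Len (ℓ + 2) j = (2 + ℓ % 2) * 2 ^ (ℓ / 2) + j % 2 ^ (ℓ / 2) := len_add_two ℓ j
      _ < (2 + ℓ % 2) * 2 ^ (ℓ / 2) + 2 ^ (ℓ / 2) := by
          gcongr; exact Nat.mod_lt j (Nat.two_pow_pos _)
      _ = (2 + ℓ % 2 + 1) * 2 ^ (ℓ / 2) := by ring
      _ ≤ 4 * 2 ^ (ℓ / 2) := by gcongr; omega
      _ = 2 ^ ((ℓ + 2) / 2 + 1) := by rw [Nat.add_div_right ℓ two_pos]; ring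

theorem len_lt_len_add_one {ℓ : ℕ} (hℓ : 1 ≤ ℓ) (j : ℕ) : Len ℓ j < Len (ℓ + 1) j := by
  obtain ⟨k, rfl | rfl⟩ : ∃ k, ℓ = 2 * k + 2 ∨ ℓ = 2 * k + 1 := ⟨(ℓ - 1) / 2, by omega⟩
  · have even_value : Len (2 * k + 2) j = 2 * 2 ^ k + j % 2 ^ k := by
      simpa using len_add_two (2 * k) j
    have odd_value : Len (2 * k + 2 + 1) j = 3 * 2 ^ k + j % 2 ^ k := by
      simpa [Nat.mul_add_div] using len_add_two (2 * k + 1) j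
    rw [even_value, odd_value]
    gcongr
    norm_num
  · calc Len (2 * k + 1) j < 2 ^ ((2 * k + 1) / 2 + 1) := len_lt_two_pow_half_add_one hℓ j
      _ = 2 ^ ((2 * k + 1 + 1) / 2) := by congr 1; omega
      _ ≤ Len (2 * k + 1 + 1) j := two_pow_half_le_len _ j

theorem len_two_mul_sub_one_lt_two_pow {m : ℕ} (hm : 1 ≤ m) (j : ℕ) :
    Len (2 * m - 1) j < 2 ^ m := by
  have half_add_one : (2 * m - 1) / 2 + 1 = m := by omega
  simpa only [half_add_one] using
    len_lt_two_pow_half_add_one (ℓ := 2 * m - 1) (by omega) j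

theorem half_le_log_two_of_len_le {ℓ j L : ℕ} (h : Len ℓ j ≤ L) : ℓ / 2 ≤ Nat.log 2 L :=
  Nat.le_log_of_pow_le one_lt_two ((two_pow_half_le_len ℓ j).trans h)

theorem mem_Icc_of_isGreatest_len_lt {j L A : ℕ}
    (hA : IsGreatest {ℓ | 1 ≤ ℓ ∧ Len ℓ j < L} A) :
    A ∈ Set.Icc (2 * Nat.log 2 L - 1) (2 * Nat.log 2 L + 1) := by
  obtain ⟨⟨-, len_lt⟩, is_upper_bound⟩ := hA
  constructor
  · rcases Nat.eq_zero_or_pos (Nat.log 2 L) with log_eq_zero | log_pos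
    · simp [log_eq_zero]
    · have pow_le : 2 ^ Nat.log 2 L ≤ L := Nat.pow_log_le_self 2 (by omega)
      exact is_upper_bound ⟨by omega, (len_two_mul_sub_one_lt_two_pow log_pos j).trans_le pow_le⟩
  · have := half_le_log_two_of_len_le len_lt.le
    omega

/-- Let `1 ≤ i < j`, `L = j - i + 1` and `m = ⌊log₂ L⌋`.  Then `Len(·, j)` is strictly
increasing on `ℓ ≥ 1`, `Len(2m-1, j) < 2^m ≤ L`, `Len(2m+2, j) ≥ 2^(m+1) > L`, and
consequently `α(i,j)`, the largest `ℓ ≥ 1` with `Len(ℓ, j) < j - i + 1`, lies in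
`{2m-1, 2m, 2m+1}`. -/
theorem stmt_1 (i j A : ℕ) (hi : 1 ≤ i) (hij : i < j)
    (hA1 : 1 ≤ A) (hA2 : Len A j < j - i + 1)
    (hA3 : ∀ ℓ, 1 ≤ ℓ → Len ℓ j < j - i + 1 → ℓ ≤ A) :
    (∀ ℓ, 1 ≤ ℓ → Len ℓ j < Len (ℓ + 1) j) ∧
    Len (2 * Nat.log 2 (j - i + 1) - 1) j < 2 ^ Nat.log 2 (j - i + 1) ∧
    2 ^ Nat.log 2 (j - i + 1) ≤ j - i + 1 ∧
    2 ^ (Nat.log 2 (j - i + 1) + 1) ≤ Len (2 * Nat.log 2 (j - i + 1) + 2) j ∧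
    j - i + 1 < 2 ^ (Nat.log 2 (j - i + 1) + 1) ∧
    (A = 2 * Nat.log 2 (j - i + 1) - 1 ∨ A = 2 * Nat.log 2 (j - i + 1) ∨
      A = 2 * Nat.log 2 (j - i + 1) + 1) := by
  have log_pos : 1 ≤ Nat.log 2 (j - i + 1) := Nat.log_pos one_lt_two (by omega)
  have greatest : IsGreatest {ℓ | 1 ≤ ℓ ∧ Len ℓ j < j - i + 1} A :=
    ⟨⟨hA1, hA2⟩, fun ℓ hℓ => hA3 ℓ hℓ.1 hℓ.2⟩
  refine ⟨fun ℓ hℓ => len_lt_len_add_one hℓ j, len_two_mul_sub_one_lt_two_pow log_pos j,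
    Nat.pow_log_le_self 2 (Nat.succ_ne_zero _), ?_, Nat.lt_pow_succ_log_self one_lt_two _, ?_⟩
  · simpa using two_pow_half_le_len (2 * Nat.log 2 (j - i + 1) + 2) j
  · obtain ⟨lower, upper⟩ := mem_Icc_of_isGreatest_len_lt greatest
    omega
end

section
/- Let T be a string of length n and 1 ≤ i ≤ j ≤ n. Let p ∈ [i, j] be the position such that T[p..] is the lexicographically minimal element of Suf[i, j]. Then the minimal suffix of T[i..j] is either T[p..j] or the shortest nonempty border of T[p..j]; moreover, in the latter case the length of the minimal suffix of T[i..j] is at most |T[p..j]|/2. -/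
variable {α : Type*} [LinearOrder α]

/-- `substr T i j` is the 1-indexed substring `T[i..j]` (inclusive). -/
def substr (T : List α) (i j : ℕ) : List α := (T.drop (i - 1)).take (j - i + 1)

/-- `sufFrom T i` is the 1-indexed suffix `T[i..]`. -/
def sufFrom (T : List α) (i : ℕ) : List α := T.drop (i - 1)

/-- `s` is the lexicographically minimal nonempty suffix of `w`. -/
def IsMinSuffix (w s : List α) : Prop :=
  s ≠ [] ∧ s <:+ w ∧ ∀ t, t ≠ [] → t <:+ w → ¬ List.Lex (· < ·) t s

/-- `s` is a border of `w`: a prefix and a suffix of `w` that differs from `w`. -/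
def IsBorder (w s : List α) : Prop := s <+: w ∧ s <:+ w ∧ s ≠ w

/-!
Put `P = T[p..j]`, `Z = T[j+1..]`, and let `s ≠ P` be the minimal suffix of `T[i..j]`, so `s ≺ P`.
A mismatch between `s` and `P` would survive appending `Z` and give `s ++ Z ≺ P ++ Z`, against the
choice of `p`; hence `s` is a border of `P`. A nonempty border of `s` would be a smaller suffix of
`T[i..j]`, so `s` is unbordered. An unbordered border is the shortest nonempty one, and its two
occurrences at the ends of `P` cannot overlap.
-/

section Words

variable {β : Type*} {r : β → β → Prop} {s t v w : List β}

theorem lex_of_isPrefix_of_ne (h : s <+: w) (hne : s ≠ w) : List.Lex r s w := by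
  obtain ⟨u, rfl⟩ := h
  cases u with
  | nil => exact absurd (List.append_nil s).symm hne
  | cons a u => simpa only [List.append_nil] using List.Lex.append_left r (.nil (a := a)) s

theorem isPrefix_or_lex_append_append (h : List.Lex r s w) (x y : List β) :
    s <+: w ∨ List.Lex r (s ++ x) (w ++ y) := by
  induction h with
  | nil => exact .inl List.nil_prefix
  | cons _ ih => exact ih.imp (List.prefix_cons_inj _).2 .cons
  | rel hab => exact .inr (.rel hab)

theorem IsBorder.length_lt (hs : IsBorder w s) : s.length < w.length :=
  lt_of_not_ge fun hle => hs.2.2 (hs.1.eq_of_length_le hle)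

theorem IsBorder.of_length_lt (hs : IsBorder w s) (ht : IsBorder w t)
    (hlt : t.length < s.length) : IsBorder s t :=
  ⟨List.prefix_of_prefix_length_le ht.1 hs.1 hlt.le,
    List.suffix_of_suffix_length_le ht.2.1 hs.2.1 hlt.le, ne_of_apply_ne List.length hlt.ne⟩

/-- The border of `s` is the overlap of its prefix and suffix occurrences in `w` (`[]` when they are
disjoint). -/
theorem IsBorder.drop (hs : IsBorder w s) (hs0 : s ≠ []) :
    IsBorder s (s.drop (w.length - s.length)) := by
  have hpos : 0 < w.length - s.length := Nat.sub_pos_of_lt hs.length_lt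
  refine ⟨?_, List.drop_suffix _ _, fun heq => ?_⟩
  · conv_rhs => rw [List.suffix_iff_eq_drop.1 hs.2.1]
    exact hs.1.drop _
  · have hlen := congrArg List.length heq
    rw [List.length_drop] at hlen
    have hspos : 0 < s.length := List.length_pos_iff.2 hs0
    lia

/-- `w` is unbordered: it has no nonempty border. This is the property that makes a minimal suffix,
once it is a border, the shortest and a non-overlapping one. The empty word counts as unbordered. -/
def IsUnbordered (w : List β) : Prop := ∀ s, s ≠ [] → ¬ IsBorder w s

theorem IsUnbordered.length_le_of_isBorder (hu : IsUnbordered s) (hs : IsBorder w s)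
    (ht0 : t ≠ []) (ht : IsBorder w t) : s.length ≤ t.length :=
  le_of_not_gt fun hlt => hu t ht0 (hs.of_length_lt ht hlt)

theorem IsUnbordered.two_mul_length_le_of_isBorder (hu : IsUnbordered s) (hs : IsBorder w s) :
    2 * s.length ≤ w.length := by
  by_contra! hlt
  have hs0 : s ≠ [] := by
    rintro rfl
    simp at hlt
  have hoverlap : s.drop (w.length - s.length) ≠ [] := by
    rw [ne_eq, List.drop_eq_nil_iff]
    lia
  exact hu _ hoverlap (hs.drop hs0)

end Words

section MinSuffix

variable {s v w x y : List α}

theorem IsMinSuffix.isUnbordered (hs : IsMinSuffix w s) : IsUnbordered s :=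
  fun t ht0 ht => hs.2.2 t ht0 (ht.2.1.trans hs.2.1) (lex_of_isPrefix_of_ne ht.1 ht.2.2)

theorem IsMinSuffix.isBorder_of_not_lex_append (hs : IsMinSuffix w s) (hv0 : v ≠ []) (hv : v <:+ w)
    (hsv : ¬ List.Lex (· < ·) (s ++ x) (v ++ y)) (hne : s ≠ v) : IsBorder v s := by
  have hlex : List.Lex (· < ·) s v := (lt_or_gt_of_ne hne).resolve_right (hs.2.2 v hv0 hv)
  have hpre : s <+: v := (isPrefix_or_lex_append_append hlex x y).resolve_right hsv
  exact ⟨hpre, List.suffix_of_suffix_length_le hs.2.1 hv hpre.length_le, hne⟩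

end MinSuffix

section Substr

variable {β : Type*} {T t : List β} {i j q : ℕ}

theorem length_substr (hi : 1 ≤ i) (hij : i ≤ j) (hj : j ≤ T.length) :
    (substr T i j).length = j - i + 1 := by
  rw [substr, List.length_take_of_le]
  rw [List.length_drop]
  lia

theorem substr_append_drop (hi : 1 ≤ i) (hij : i ≤ j) :
    substr T i j ++ T.drop j = sufFrom T i := by
  have hdrop : T.drop j = (T.drop (i - 1)).drop (j - i + 1) := by
    rw [List.drop_drop]
    congr 1
    lia
  rw [hdrop, substr, sufFrom, List.take_append_drop]

theorem drop_substr (hi : 1 ≤ i) (hiq : i ≤ q) (hqj : q ≤ j) :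
    (substr T i j).drop (q - i) = substr T q j := by
  rw [substr, substr, List.drop_take, List.drop_drop]
  congr 2 <;> lia

theorem ne_nil_and_suffix_substr_iff (hi : 1 ≤ i) (hij : i ≤ j) (hj : j ≤ T.length) :
    t ≠ [] ∧ t <:+ substr T i j ↔ ∃ q, i ≤ q ∧ q ≤ j ∧ substr T q j = t := by
  have hlen := length_substr hi hij hj
  constructor
  · rintro ⟨ht0, ht⟩
    have hpos : 0 < t.length := List.length_pos_iff.2 ht0
    have hle : t.length ≤ j - i + 1 := hlen ▸ ht.length_le
    refine ⟨j + 1 - t.length, by lia, by lia, ?_⟩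
    have hstart : j + 1 - t.length - i = (substr T i j).length - t.length := by lia
    rw [← drop_substr hi (by lia) (by lia), hstart, ← List.suffix_iff_eq_drop.1 ht]
  · rintro ⟨q, hiq, hqj, rfl⟩
    refine ⟨List.length_pos_iff.1 ?_, drop_substr hi hiq hqj ▸ List.drop_suffix _ _⟩
    rw [length_substr (hi.trans hiq) hqj hj]
    exact Nat.succ_pos _

end Substr

/-- Let `T` be a string of length `n`, `1 ≤ i ≤ j ≤ n`, and let `p ∈ [i,j]` be the position of
the lexicographically minimal suffix in `Suf[i,j]`.  Then the minimal suffix of `T[i..j]`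
either equals `T[p..j]`, or it is the shortest nonempty border of `T[p..j]` and its length is
at most `|T[p..j]|/2`. -/
theorem stmt_3 (T : List α) (i j p : ℕ)
    (hi : 1 ≤ i) (hij : i ≤ j) (hj : j ≤ T.length)
    (hp1 : i ≤ p) (hp2 : p ≤ j)
    (hpmin : ∀ q, i ≤ q → q ≤ j → ¬ List.Lex (· < ·) (sufFrom T q) (sufFrom T p)) :
    ∀ s, IsMinSuffix (substr T i j) s →
      s = substr T p j ∨
      ((s ≠ [] ∧ IsBorder (substr T p j) s ∧
          ∀ t, t ≠ [] → IsBorder (substr T p j) t → s.length ≤ t.length) ∧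
        2 * s.length ≤ (substr T p j).length) := by
  intro s hs
  obtain ⟨q, hiq, hqj, rfl⟩ := (ne_nil_and_suffix_substr_iff hi hij hj).1 ⟨hs.1, hs.2.1⟩
  obtain ⟨hp0, hp⟩ := (ne_nil_and_suffix_substr_iff hi hij hj).2 ⟨p, hp1, hp2, rfl⟩
  refine or_iff_not_imp_left.2 fun hne => ?_
  have hmin : ¬ List.Lex (· < ·) (substr T q j ++ T.drop j) (substr T p j ++ T.drop j) := by
    rw [substr_append_drop (hi.trans hiq) hqj, substr_append_drop (hi.trans hp1) hp2]
    exact hpmin q hiq hqj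
  have hborder : IsBorder (substr T p j) (substr T q j) :=
    hs.isBorder_of_not_lex_append hp0 hp hmin hne
  exact ⟨⟨hs.1, hborder, fun _ => hs.isUnbordered.length_le_of_isBorder hborder⟩,
    hs.isUnbordered.two_mul_length_le_of_isBorder hborder⟩
end

section
/- If x = w_1^{α_1} w_2^{α_2} ⋯ w_k^{α_k} is a Lyndon decomposition of a nonempty string x, then w_k is the minimal suffix of x. -/
variable {α : Type*} [LinearOrder α]

/-- `w` is a Lyndon word: it is nonempty and lexicographically strictly smaller than all of its
proper cyclic rotations. -/
def IsLyndon (w : List α) : Prop :=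
  w ≠ [] ∧ ∀ u v : List α, u ≠ [] → v ≠ [] → w = u ++ v → List.Lex (· < ·) w (v ++ u)

/-- `lrep w a` is `w^a`, the concatenation of `a` copies of `w`. -/
def lrep (w : List α) (a : ℕ) : List α := (List.replicate a w).flatten

/-!
A Lyndon word `w` is below each of its proper nonempty suffixes `v`. To see this, write `w = u v`
and compare `v` with the prefix `p` of `w` of the same length. If `v < p`, then the rotation `v u`
is below `w`. If `v = p`, say `w = v q` with `|q| = |u|`, then `w < v u` gives `q < u`, so the
rotation `q v` is below `w`. Both are impossible, hence `p < v` and `w < v`.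

A nonempty suffix `t` of a concatenation of Lyndon words starts inside one of them, say `w`, so
`t` begins with a nonempty suffix `s` of `w`, and `t ≥ s ≥ w`.
-/

section Suffixes

variable {β : Type*}

theorem exists_suffix_prefix_of_suffix_flatten {L : List (List β)} {t : List β} (ht : t ≠ [])
    (hsuf : t <:+ L.flatten) : ∃ w ∈ L, ∃ s, s ≠ [] ∧ s <:+ w ∧ s <+: t := by
  induction L with
  | nil => exact absurd (List.suffix_nil.1 hsuf) ht
  | cons w L ih =>
    have of_suffix_tail (h : t <:+ L.flatten) :
        ∃ w' ∈ w :: L, ∃ s, s ≠ [] ∧ s <:+ w' ∧ s <+: t := by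
      obtain ⟨w', hw', hs⟩ := ih h
      exact ⟨w', List.mem_cons_of_mem w hw', hs⟩
    obtain ⟨p, hp⟩ := hsuf
    rw [List.flatten_cons, List.append_eq_append_iff] at hp
    obtain ⟨s, rfl, rfl⟩ | ⟨q, -, hq⟩ := hp
    · obtain rfl | hs := eq_or_ne s []
      · exact of_suffix_tail List.suffix_rfl
      · exact ⟨p ++ s, List.mem_cons_self, s, hs, List.suffix_append p s, List.prefix_append s _⟩
    · exact of_suffix_tail ⟨q, hq.symm⟩

theorem exists_flatten_zipWith_lrep_eq_append_getLast {ws : List (List β)} {as : List ℕ}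
    (hne : ws ≠ []) (hlen : ws.length = as.length) (has : ∀ a ∈ as, 1 ≤ a) :
    ∃ L ⊆ ws, (List.zipWith lrep ws as).flatten = L.flatten ++ ws.getLast hne := by
  induction ws generalizing as with
  | nil => exact absurd rfl hne
  | cons w ws ih =>
    obtain _ | ⟨a, as⟩ := as
    · simp at hlen
    obtain ⟨ha, has⟩ := List.forall_mem_cons.1 has
    obtain rfl | hws := eq_or_ne ws []
    · obtain ⟨b, rfl⟩ := Nat.exists_eq_add_of_le' ha
      exact ⟨List.replicate b w, List.replicate_subset_singleton b w,
        by simp [lrep, List.replicate_succ']⟩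
    · obtain ⟨L, hL, hflat⟩ := ih hws (by simpa using hlen) has
      refine ⟨List.replicate a w ++ L, List.append_subset.2 ⟨?_, ?_⟩, ?_⟩
      · exact List.replicate_subset.2 (.inr List.mem_cons_self)
      · exact List.subset_cons_of_subset w hL
      · simp [hflat, lrep, List.getLast_cons hws]

end Suffixes

theorem append_lt_append_of_lt_of_length_le {u v : List α} (h : u < v)
    (hlen : v.length ≤ u.length) (a b : List α) : u ++ a < v ++ b := by
  induction h with
  | nil => simp at hlen
  | rel hxy => exact .rel hxy
  | cons _ ih => exact .cons (ih (by simpa using hlen))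

theorem IsLyndon.le_of_suffix {w v : List α} (hw : IsLyndon w) (hv : v ≠ []) (hvw : v <:+ w) :
    w ≤ v := by
  obtain ⟨u, huv⟩ := hvw
  obtain rfl | hu := eq_or_ne u []
  · exact huv.ge
  have hw_lt : w < v ++ u := hw.2 u v hu hv huv.symm
  obtain ⟨p, q, hpq, hp⟩ : ∃ p q, w = p ++ q ∧ p.length = v.length :=
    ⟨w.take v.length, w.drop v.length, (List.take_append_drop _ w).symm, by simp [← huv]⟩
  obtain hlt | rfl | hgt := lt_trichotomy v p
  · have hrot_lt : v ++ u < w :=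
      hpq ▸ append_lt_append_of_lt_of_length_le hlt hp.le u q
    exact absurd hw_lt hrot_lt.asymm
  · have hqu : q.length = u.length := by
      simpa [hpq, add_comm u.length] using congrArg List.length huv.symm
    have hq : q ≠ [] := by
      rwa [← List.length_pos_iff, hqu, List.length_pos_iff]
    have hq_lt : q < u :=
      not_le.1 fun hle => List.append_left_le (not_lt.2 hle) (hpq ▸ hw_lt)
    have hrot_lt : q ++ v < w :=
      huv ▸ append_lt_append_of_lt_of_length_le hq_lt hqu.ge v v
    exact absurd (hw.2 v q hv hq hpq) hrot_lt.asymm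
  · have : w < v := by
      simpa [hpq] using append_lt_append_of_lt_of_length_le hgt hp.ge q []
    exact this.le

theorem stmt_5_general {L : List (List α)} {w : List α} (hw : IsLyndon w)
    (hL : ∀ v ∈ L, IsLyndon v) (hle : ∀ v ∈ L, w ≤ v) : IsMinSuffix (L.flatten ++ w) w := by
  refine ⟨hw.1, List.suffix_append _ w, fun t ht hsuf => ?_⟩
  obtain ⟨v, hv, s, hs, hsv, hst⟩ :=
    exists_suffix_prefix_of_suffix_flatten (L := L ++ [w]) ht (by simpa using hsuf)
  have ⟨hv_lyndon, hwv⟩ : IsLyndon v ∧ w ≤ v := by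
    obtain hvL | rfl := (List.mem_append.1 hv).imp_right List.mem_singleton.1
    · exact ⟨hL v hvL, hle v hvL⟩
    · exact ⟨hw, le_rfl⟩
  have : w ≤ t :=
    calc w ≤ v := hwv
      _ ≤ s := hv_lyndon.le_of_suffix hs hsv
      _ ≤ t := not_lt.1 hst.le
  exact this.not_gt

/-- If `x = w₁^{a₁} w₂^{a₂} ⋯ w_k^{a_k}` is a Lyndon decomposition of a nonempty string `x`
(the `wᵢ` are Lyndon words with `w₁ ≻ w₂ ≻ ⋯ ≻ w_k` and all `aᵢ ≥ 1`), then `w_k` is the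
minimal suffix of `x`. -/
theorem stmt_5 (x : List α) (ws : List (List α)) (as : List ℕ)
    (hne : ws ≠ []) (hlen : ws.length = as.length)
    (ha : ∀ a ∈ as, 1 ≤ a)
    (hlyn : ∀ w ∈ ws, IsLyndon w)
    (hdec : ws.Pairwise (fun w w' => List.Lex (· < ·) w' w))
    (hx : x = (List.zipWith lrep ws as).flatten) :
    IsMinSuffix x (ws.getLast hne) := by
  obtain ⟨L, hL, hflat⟩ := exists_flatten_zipWith_lrep_eq_append_getLast hne hlen ha
  have getLast_le (w) (hw : w ∈ ws) : ws.getLast hne ≤ w :=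
    (hdec.imp le_of_lt : ws.Pairwise (· ≥ ·)).rel_getLast hw
  rw [hx, hflat]
  exact stmt_5_general (hlyn _ (List.getLast_mem hne)) (fun v hv => hlyn v (hL hv))
    fun v hv => getLast_le v (hL hv)
end

section
/- Let x = u v^α where v is the minimal suffix of x, α ≥ 1 is an integer, and u does not have v as a suffix. Let u = z_1^{β_1} z_2^{β_2} ⋯ z_ℓ^{β_ℓ} be the Lyndon decomposition of u. Then x = z_1^{β_1} z_2^{β_2} ⋯ z_ℓ^{β_ℓ} v^α is the Lyndon decomposition of x (in particular, v is a Lyndon word and z_ℓ ≻ v). -/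
/-!
A proper suffix of `v` is a suffix of `x`, hence larger than `v`; so `v` is Lyndon.

That `v ≺ z_ℓ` rests on one observation, used twice: a word lying between `s` and `s r` has `s` as a
prefix. Let `z` be a nonempty suffix of `u` and suppose `z ≼ v`. Since `z v^a` is a suffix of `x`,
minimality of `v` gives `z ≼ v ≼ z v^a`, hence `v = z w`, where `w` is nonempty because `v` is not a
suffix of `u`. Now `w` is again a suffix of `x`, so `v ≼ w`, and cancelling `z` in `z w ≼ z v^a`
gives `w ≼ v^a`. Thus `v` is a prefix of the shorter word `w`, which is absurd.
-/

variable {α : Type*} [LinearOrder α]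

theorem le_of_append_le_append_left {p s t : List α} (h : p ++ s ≤ p ++ t) : s ≤ t :=
  le_of_not_gt fun hts => h.not_gt (List.append_left_lt hts)

theorem prefix_of_le_of_le_append {s t r : List α} (hst : s ≤ t) (htr : t ≤ s ++ r) :
    s <+: t := by
  induction s generalizing t with
  | nil => exact List.nil_prefix
  | cons a s ih =>
    cases t with
    | nil => exact absurd (List.nil_lt_cons a s) hst.not_gt
    | cons b t =>
      obtain rfl : a = b := le_antisymm
        (le_of_not_gt fun hba => hst.not_gt (List.Lex.rel hba))
        (le_of_not_gt fun hab => htr.not_gt (List.Lex.rel hab))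
      exact (List.prefix_cons_inj a).2 <|
        ih (le_of_append_le_append_left (p := [a]) hst) (le_of_append_le_append_left (p := [a]) htr)

namespace IsMinSuffix

variable {x u v r t z : List α}

theorem le_of_suffix (hv : IsMinSuffix x v) (ht : t ≠ []) (htx : t <:+ x) : v ≤ t :=
  not_lt.mp (hv.2.2 t ht htx)

theorem isLyndon (hv : IsMinSuffix x v) : IsLyndon v := by
  refine ⟨hv.1, fun p s hp hs hps => ?_⟩
  have hsv : s <:+ v := ⟨p, hps.symm⟩
  have hne : v ≠ s := fun h => hp (List.self_eq_append_left.1 (h ▸ hps))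
  have hvs : v < s := (hv.le_of_suffix hs (hsv.trans hv.2.1)).lt_of_ne hne
  exact List.Lex.append_right (· < ·) p hvs

theorem lt_of_suffix (hv : IsMinSuffix (u ++ (v ++ r)) v) (hvu : ¬ v <:+ u) (hz : z ≠ [])
    (hzu : z <:+ u) : v < z := by
  by_contra! hzv
  have hvzr : v ≤ z ++ (v ++ r) :=
    hv.le_of_suffix (by simp [hz]) (List.suffix_append_self_iff.2 hzu)
  obtain ⟨w, rfl⟩ := prefix_of_le_of_le_append hzv hvzr
  have hw : w ≠ [] := by
    rintro rfl
    exact hvu (by simpa using hzu)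
  have hvw : z ++ w ≤ w := hv.le_of_suffix hw ((List.suffix_append z w).trans hv.2.1)
  have hwv : w ≤ z ++ w ++ r := le_of_append_le_append_left hvzr
  have hprefix : z ++ w <+: w := prefix_of_le_of_le_append hvw hwv
  exact hz (by simpa using hprefix.length_le)

end IsMinSuffix

omit [LinearOrder α] in
theorem suffix_lrep (w : List α) {a : ℕ} (ha : 1 ≤ a) : w <:+ lrep w a := by
  obtain ⟨n, rfl⟩ := Nat.exists_eq_add_of_le' ha
  exact ⟨lrep w n, by simp [lrep, List.replicate_succ']⟩

omit [LinearOrder α] in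
theorem suffix_flatten_zipWith_lrep_of_mem_getLast? {zs : List (List α)} {bs : List ℕ} {z : List α}
    (hlen : zs.length = bs.length) (hb : ∀ b ∈ bs, 1 ≤ b) (hz : z ∈ zs.getLast?) :
    z <:+ (List.zipWith lrep zs bs).flatten := by
  obtain ⟨zs, rfl⟩ := List.getLast?_eq_some_iff.1 hz
  obtain rfl | ⟨bs, b, rfl⟩ := List.eq_nil_or_concat' bs
  · simp at hlen
  · have hlen : zs.length = bs.length := by simpa using hlen
    rw [List.zipWith_append hlen, List.flatten_append]
    exact List.suffix_append_of_suffix (by simpa using suffix_lrep z (hb b (by simp)))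

theorem stmt_6_general {u v : List α} {a : ℕ} {zs : List (List α)} {bs : List ℕ}
    (hv : IsMinSuffix (u ++ lrep v a) v)
    (hns : ¬ v <:+ u)
    (hlen : zs.length = bs.length)
    (hb : ∀ b ∈ bs, 1 ≤ b)
    (hne : ∀ z ∈ zs, z ≠ [])
    (hdec : zs.Pairwise (· > ·))
    (hu : u = (List.zipWith lrep zs bs).flatten) :
    IsLyndon v ∧
    (zs ++ [v]).Pairwise (· > ·) ∧
    u ++ lrep v a = (List.zipWith lrep (zs ++ [v]) (bs ++ [a])).flatten := by
  refine ⟨hv.isLyndon, ?_, by simp [List.zipWith_append hlen, hu]⟩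
  obtain _ | n := a
  · exact absurd (by simpa [lrep] using hv.2.1) hns
  have hvn : lrep v (n + 1) = v ++ lrep v n := by simp [lrep, List.replicate_succ]
  rw [hvn] at hv
  have hlast : ∀ z ∈ zs.getLast?, v < z := fun z hz =>
    hv.lt_of_suffix hns (hne z (List.mem_of_getLast? hz))
      (hu ▸ suffix_flatten_zipWith_lrep_of_mem_getLast? hlen hb hz)
  rw [← List.isChain_iff_pairwise] at hdec ⊢
  exact List.isChain_append.2 ⟨hdec, List.isChain_singleton v, by simpa using hlast⟩

/-- Let `x = u v^a` where `v` is the minimal suffix of `x`, `a ≥ 1`, and `u` does not have `v`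
as a suffix.  Let `u = z₁^{b₁} ⋯ z_ℓ^{b_ℓ}` be the Lyndon decomposition of `u`.  Then
`x = z₁^{b₁} ⋯ z_ℓ^{b_ℓ} v^a` is the Lyndon decomposition of `x`; in particular `v` is a
Lyndon word and `z_ℓ ≻ v`. -/
theorem stmt_6 (x u v : List α) (a : ℕ) (zs : List (List α)) (bs : List ℕ)
    (hx : x = u ++ lrep v a)
    (hv : IsMinSuffix x v)
    (ha : 1 ≤ a)
    (hns : ¬ v <:+ u)
    (hlen : zs.length = bs.length)
    (hb : ∀ b ∈ bs, 1 ≤ b)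
    (hlyn : ∀ z ∈ zs, IsLyndon z)
    (hdec : zs.Pairwise (fun w w' => List.Lex (· < ·) w' w))
    (hu : u = (List.zipWith lrep zs bs).flatten) :
    IsLyndon v ∧
    (zs ++ [v]).Pairwise (fun w w' => List.Lex (· < ·) w' w) ∧
    x = (List.zipWith lrep (zs ++ [v]) (bs ++ [a])).flatten := by
  subst hx
  exact stmt_6_general hv hns hlen hb (fun z hz => (hlyn z hz).1) hdec hu
end

section
/- Let ρ be a primitive string, ρ' a proper (possibly empty) prefix of ρ, s ≥ 2 an integer, and set P_2 = ρ^s ρ'. Let w be a string such that P_2 is both a prefix and a suffix of w and |w| + |ρ| ≤ 2|P_2|. Then w = ρ^t ρ' for some integer t ≥ s. -/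
variable {α : Type*} [LinearOrder α]

/-- `ρ` is primitive: it cannot be written as `x^k` for a string `x` and an integer `k ≥ 2`. -/
def IsPrimitive (ρ : List α) : Prop := ∀ (x : List α) (k : ℕ), 2 ≤ k → ρ ≠ lrep x k

/-!
Put `P = ρ^s ρ'` and `w = u P`. The word `P` has period `|ρ|`, and being also a prefix of `u P` it
has period `|u|`. The length bound says `|u| + |ρ| ≤ |P|`, so by the Fine–Wilf theorem `P`, and
with it its prefix `ρ`, has period `gcd |ρ| |u|`. A primitive word has no period properly dividing
its length, hence `|ρ|` divides `|u|`. Since `u` is a prefix of `P`, it is a power of `ρ`.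
-/

section Words

variable {β : Type*}

theorem lrep_add (x : List β) (m n : ℕ) : lrep x (m + n) = lrep x m ++ lrep x n := by
  simp only [lrep, List.replicate_add, List.flatten_append]

theorem lrep_one (x : List β) : lrep x 1 = x := by
  simp [lrep]

theorem lrep_succ (x : List β) (n : ℕ) : lrep x (n + 1) = x ++ lrep x n := by
  rw [add_comm, lrep_add, lrep_one]

theorem length_lrep (x : List β) (n : ℕ) : (lrep x n).length = n * x.length := by
  simp [lrep]

theorem lrep_prefix_lrep (x : List β) {m n : ℕ} (h : m ≤ n) : lrep x m <+: lrep x n := by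
  rw [← Nat.add_sub_cancel' h, lrep_add]
  exact List.prefix_append _ _

theorem lrep_append_prefix_lrep_succ {x y : List β} (h : y <+: x) (n : ℕ) :
    lrep x n ++ y <+: lrep x (n + 1) := by
  rwa [lrep_add, lrep_one, List.prefix_append_right_inj]

theorem eq_lrep_of_prefix_lrep_of_length_dvd {x u : List β} {n : ℕ} (hu : u <+: lrep x n)
    (hdvd : x.length ∣ u.length) : ∃ q, u = lrep x q := by
  obtain ⟨q, hq⟩ := hdvd
  have hlen : u.length = (lrep x q).length := by rw [hq, length_lrep, mul_comm]
  have hu' : u <+: lrep x (n + q) := hu.trans (lrep_prefix_lrep x (Nat.le_add_right n q))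
  have hq' : lrep x q <+: lrep x (n + q) := lrep_prefix_lrep x (Nat.le_add_left q n)
  exact ⟨q, (List.prefix_of_prefix_length_le hu' hq' hlen.le).eq_of_length hlen⟩

theorem prefix_lrep_append {u v : List β} (h : v <+: u ++ v) (n : ℕ) : v <+: lrep u n ++ v := by
  induction n with
  | zero => simp [lrep]
  | succ n ih =>
    rw [lrep_succ, List.append_assoc]
    exact h.trans ((List.prefix_append_right_inj u).2 ih)

theorem hasPeriod_length_of_prefix_append {u v : List β} (h : v <+: u ++ v) :
    v.HasPeriod u.length := by
  rcases le_total v.length u.length with hvu | huv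
  · exact List.hasPeriod_of_length_le v _ hvu
  · have hu : u <+: v := List.prefix_of_prefix_length_le (List.prefix_append u v) h huv
    rwa [List.HasPeriod, ← List.prefix_iff_eq_take.1 hu]

theorem hasPeriod_length_of_prefix_lrep {x v : List β} {n : ℕ} (h : v <+: lrep x n) :
    v.HasPeriod x.length := by
  have hpow : lrep x n <+: x ++ lrep x n := by
    rw [← lrep_succ]
    exact lrep_prefix_lrep x n.le_succ
  exact (hasPeriod_length_of_prefix_append hpow).infix h.isInfix

theorem eq_lrep_take_of_hasPeriod_of_dvd {v : List β} {p : ℕ} (hv : v.HasPeriod p)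
    (hdvd : p ∣ v.length) : v = lrep (v.take p) (v.length / p) := by
  rcases eq_or_ne v [] with rfl | hne
  · simp [lrep]
  have hp : p ≤ v.length := Nat.le_of_dvd (List.length_pos_iff.2 hne) hdvd
  have hlen : v.length = (lrep (v.take p) (v.length / p)).length := by
    rw [length_lrep, List.length_take_of_le hp, Nat.div_mul_cancel hdvd]
  exact (List.prefix_of_prefix_length_le (prefix_lrep_append hv _) (List.prefix_append _ _)
    hlen.le).eq_of_length hlen

theorem IsPrimitive.ne_nil {ρ : List β} (hρ : IsPrimitive ρ) : ρ ≠ [] := by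
  rintro rfl
  exact hρ [] 2 le_rfl (by simp [lrep])

theorem IsPrimitive.eq_length_of_hasPeriod_of_dvd {ρ : List β} (hρ : IsPrimitive ρ) {p : ℕ}
    (hper : ρ.HasPeriod p) (hdvd : p ∣ ρ.length) : p = ρ.length := by
  have hpow : ρ = lrep (ρ.take p) (ρ.length / p) := eq_lrep_take_of_hasPeriod_of_dvd hper hdvd
  have hlt : ρ.length / p < 2 := not_le.1 fun h => hρ _ _ h hpow
  have hne : ρ.length / p ≠ 0 := fun h => hρ.ne_nil (by simpa [h, lrep] using hpow)
  have hone : ρ.length / p = 1 :=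
    le_antisymm (Nat.le_of_lt_succ hlt) (Nat.one_le_iff_ne_zero.2 hne)
  simpa only [hone, one_mul] using Nat.div_mul_cancel hdvd

theorem IsPrimitive.length_dvd_of_hasPeriod {ρ v : List β} (hρ : IsPrimitive ρ) {p : ℕ}
    (hρv : ρ <+: v) (hper : v.HasPeriod ρ.length) (hper' : v.HasPeriod p)
    (hlen : ρ.length + p - ρ.length.gcd p ≤ v.length) : ρ.length ∣ p := by
  have hgcd : ρ.HasPeriod (ρ.length.gcd p) := (hper.gcd hper' hlen).infix hρv.isInfix
  exact Nat.gcd_eq_left_iff_dvd.1 (hρ.eq_length_of_hasPeriod_of_dvd hgcd (Nat.gcd_dvd_left _ _))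

theorem stmt_9_general (ρ ρ' w : List β) (s : ℕ)
    (hprim : IsPrimitive ρ)
    (hρ' : ρ' <+: ρ)
    (hpre : (lrep ρ s ++ ρ') <+: w)
    (hsuf : (lrep ρ s ++ ρ') <:+ w)
    (hlen : w.length + ρ.length ≤ 2 * (lrep ρ s ++ ρ').length) :
    ∃ t, s ≤ t ∧ w = lrep ρ t ++ ρ' := by
  obtain ⟨u, rfl⟩ := hsuf
  have hP : lrep ρ s ++ ρ' <+: lrep ρ (s + 1) := lrep_append_prefix_lrep_succ hρ' s
  have hlen' : u.length + ρ.length ≤ (lrep ρ s ++ ρ').length := by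
    rw [List.length_append] at hlen
    omega
  have huP : u <+: lrep ρ s ++ ρ' :=
    List.prefix_of_prefix_length_le (List.prefix_append u _) hpre (by omega)
  have hρpow : ρ <+: lrep ρ (s + 1) := by
    rw [lrep_succ]
    exact List.prefix_append _ _
  have hρP : ρ <+: lrep ρ s ++ ρ' := List.prefix_of_prefix_length_le hρpow hP (by omega)
  have hdvd : ρ.length ∣ u.length :=
    hprim.length_dvd_of_hasPeriod hρP (hasPeriod_length_of_prefix_lrep hP)
      (hasPeriod_length_of_prefix_append hpre) (by omega)
  obtain ⟨q, rfl⟩ := eq_lrep_of_prefix_lrep_of_length_dvd (huP.trans hP) hdvd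
  exact ⟨q + s, by omega, by rw [lrep_add, List.append_assoc]⟩

end Words

/-- Let `ρ` be a primitive string, `ρ'` a proper (possibly empty) prefix of `ρ`, `s ≥ 2`, and
`P₂ = ρ^s ρ'`.  If `P₂` is both a prefix and a suffix of `w` and `|w| + |ρ| ≤ 2|P₂|`, then
`w = ρ^t ρ'` for some integer `t ≥ s`. -/
theorem stmt_9 (ρ ρ' w : List α) (s : ℕ)
    (hprim : IsPrimitive ρ)
    (hρ'1 : ρ' <+: ρ) (hρ'2 : ρ' ≠ ρ)
    (hs : 2 ≤ s)
    (hpre : (lrep ρ s ++ ρ') <+: w)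
    (hsuf : (lrep ρ s ++ ρ') <:+ w)
    (hlen : w.length + ρ.length ≤ 2 * (lrep ρ s ++ ρ').length) :
    ∃ t, s ≤ t ∧ w = lrep ρ t ++ ρ' :=
  stmt_9_general ρ ρ' w s hprim hρ'1 hpre hsuf hlen
end

section
/- Let T be a string of length n, and let 1 ≤ p ≤ j < n. If p is not j-active, then p is not (j+1)-active. -/
/-!
If `T[p..j] ≺ T[p'..j]` with `p < p'`, then the larger string `T[p'..j]` is also the shorter one, so
`T[p..j]` is not a proper prefix of it and the comparison is decided at a mismatch. Moving the right
end from `j` to some `k ≥ j` only appends letters, which leaves that mismatch in place; hence a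
position that refutes `j`-activity of `p` also refutes its `k`-activity.
-/

variable {α : Type*} [LinearOrder α]

/-- Position `p` is `j`-active in `T`: there is no position `p'` with `p < p' ≤ j` and
`T[p'..j] ≻ T[p..j]`. -/
def JActive (T : List α) (p j : ℕ) : Prop :=
  ∀ p', p < p' → p' ≤ j → ¬ List.Lex (· < ·) (substr T p j) (substr T p' j)

section Substring

variable {β : Type*}

theorem lex_append_append_of_length_le {r : β → β → Prop} {u v : List β}
    (huv : List.Lex r u v) (hlen : v.length ≤ u.length) (a b : List β) :
    List.Lex r (u ++ a) (v ++ b) := by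
  induction huv with
  | nil => simp at hlen
  | cons _ ih => exact .cons (ih (Nat.le_of_succ_le_succ hlen))
  | rel hlt => exact .rel hlt

theorem substr_prefix_substr_of_le (T : List β) (i : ℕ) {j k : ℕ} (hjk : j ≤ k) :
    substr T i j <+: substr T i k :=
  List.take_prefix_take_left (by omega)

theorem length_substr_antitone (T : List β) (j : ℕ) :
    Antitone fun i ↦ (substr T i j).length := by
  intro p p' hpp'
  simp only [substr, List.length_take, List.length_drop]
  omega

theorem lex_substr_of_le {r : β → β → Prop} {T : List β} {p p' j k : ℕ}
    (hpp' : p ≤ p') (hjk : j ≤ k) (hlex : List.Lex r (substr T p j) (substr T p' j)) :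
    List.Lex r (substr T p k) (substr T p' k) := by
  obtain ⟨a, ha⟩ := substr_prefix_substr_of_le T p hjk
  obtain ⟨b, hb⟩ := substr_prefix_substr_of_le T p' hjk
  rw [← ha, ← hb]
  exact lex_append_append_of_length_le hlex (length_substr_antitone T j hpp') a b

end Substring

theorem JActive.anti_right {T : List α} {p j k : ℕ} (hjk : j ≤ k) (hact : JActive T p k) :
    JActive T p j :=
  fun p' hlt hle hlex ↦ hact p' hlt (hle.trans hjk) (lex_substr_of_le hlt.le hjk hlex)

/-- Let `T` be a string of length `n` and `1 ≤ p ≤ j < n`.  If `p` is not `j`-active, then `p`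
is not `(j+1)`-active. -/
theorem stmt_10 (T : List α) (p j : ℕ)
    (hp : 1 ≤ p) (hpj : p ≤ j) (hj : j < T.length)
    (h : ¬ JActive T p j) :
    ¬ JActive T p (j + 1) :=
  mt (JActive.anti_right j.le_succ) h
end

section
/- Let T be a string of length n, let 1 ≤ p ≤ p' ≤ j ≤ n, and suppose p is j-active and T[p'..j] is a prefix of T[p..j]. Then p' is j-active. -/
/-!
A suffix `u` of a string `t` with `t ≺ u` is no longer than `t`, so `t` is not a proper prefix of
`u` and the comparison is decided at a mismatching letter inside `t`. It therefore survives
extending `t` to the right to any `s` with prefix `t`. If `t` is also a suffix of `s`, then `u` is a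
suffix of `s` with `s ≺ u`. Thus a border of a string that is maximal among its suffixes is itself
maximal among its suffixes, and `p` is `j`-active exactly when `T[p..j]` is maximal in this sense.
-/

variable {α : Type*} [LinearOrder α]

section Border

variable {β : Type*} {r : β → β → Prop}

/-- The string `s` is maximal among its suffixes in the lexicographic order induced by the relation
`r` on letters. This is `j`-activity of `p` as a property of the string `T[p..j]` alone. The suffix
`s` itself is not excluded, which makes no difference when `r` is irreflexive. -/
def SuffixMaximal (r : β → β → Prop) (s : List β) : Prop :=
  ∀ t, t <:+ s → ¬ List.Lex r s t

theorem lex_append_left_of_length_le {s t : List β} (h : List.Lex r s t)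
    (hlen : t.length ≤ s.length) (w : List β) : List.Lex r (s ++ w) t := by
  induction h with
  | nil => simp at hlen
  | cons _ ih => exact .cons (ih (Nat.le_of_succ_le_succ hlen))
  | rel hab => exact .rel hab

theorem stmt_11_general {s t : List β} (hs : SuffixMaximal r s) (hpre : t <+: s)
    (hsuf : t <:+ s) : SuffixMaximal r t := by
  intro u hu hlex
  obtain ⟨w, rfl⟩ := hpre
  exact hs u (hu.trans hsuf) (lex_append_left_of_length_le hlex hu.length_le w)

theorem substr_eq_drop_take (T : List β) {i j : ℕ} (hi : 1 ≤ i) (hij : i ≤ j) :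
    substr T i j = (T.take j).drop (i - 1) := by
  rw [substr, List.drop_take, show j - (i - 1) = j - i + 1 by omega]

theorem substr_suffix_substr (T : List β) {i k j : ℕ} (hi : 1 ≤ i) (hik : i ≤ k) (hkj : k ≤ j) :
    substr T k j <:+ substr T i j := by
  rw [substr_eq_drop_take T hi (hik.trans hkj), substr_eq_drop_take T (hi.trans hik) hkj]
  exact List.drop_suffix_drop_left _ (Nat.sub_le_sub_right hik 1)

theorem eq_nil_or_eq_substr_of_suffix {T t : List β} {i j : ℕ} (hi : 1 ≤ i) (hij : i ≤ j)
    (ht : t <:+ substr T i j) : t = [] ∨ ∃ k, i ≤ k ∧ k ≤ j ∧ t = substr T k j := by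
  rw [substr_eq_drop_take T hi hij, List.suffix_iff_eq_drop, List.drop_drop] at ht
  generalize (List.drop (i - 1) (List.take j T)).length - t.length = m at ht
  rcases le_or_gt (i + m) j with hk | hk
  · refine .inr ⟨i + m, Nat.le_add_right i m, hk, ?_⟩
    rw [ht, substr_eq_drop_take T (by omega) hk, Nat.sub_add_comm hi]
  · left
    rw [ht, List.drop_eq_nil_iff]
    exact (List.length_take_le j T).trans (by omega)

end Border

theorem jActive_iff_suffixMaximal (T : List α) {p j : ℕ} (hp : 1 ≤ p) (hpj : p ≤ j) :
    JActive T p j ↔ SuffixMaximal (· < ·) (substr T p j) := by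
  refine ⟨fun hact t ht hlex ↦ ?_, fun hmax q hpq hqj ↦
    hmax _ (substr_suffix_substr T hp hpq.le hqj)⟩
  obtain rfl | ⟨q, hpq, hqj, rfl⟩ := eq_nil_or_eq_substr_of_suffix hp hpj ht
  · exact List.not_lex_nil hlex
  · obtain rfl | hlt := hpq.eq_or_lt
    · exact List.lex_irrefl lt_irrefl _ hlex
    · exact hact q hlt hqj hlex

/-- Let `T` be a string of length `n`, `1 ≤ p ≤ p' ≤ j ≤ n`, and suppose `p` is `j`-active and
`T[p'..j]` is a prefix of `T[p..j]`.  Then `p'` is `j`-active. -/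
theorem stmt_11 (T : List α) (p p' j : ℕ)
    (hp : 1 ≤ p) (hpp' : p ≤ p') (hp'j : p' ≤ j) (hj : j ≤ T.length)
    (hact : JActive T p j)
    (hpre : substr T p' j <+: substr T p j) :
    JActive T p' j := by
  rw [jActive_iff_suffixMaximal T (by omega) (by omega)] at hact ⊢
  exact stmt_11_general hact hpre (substr_suffix_substr T hp hpp' hp'j)
end

section
/- Let T be a string, w = T[i..j] a nonempty substring, and 1 ≤ k ≤ |w|. Let s_k denote the k-th smallest nonempty suffix of w in lexicographic order. Then there exists a suffix of T with NotLarger(w, ·) ≥ k; let S be the lexicographically minimal suffix of T such that k' = NotLarger(w, S) ≥ k. Then s_k is a prefix of S, and there are exactly k' − k nonempty suffixes of w that are prefixes of S longer than s_k. -/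
variable {α : Type*} [LinearOrder α]

open Classical in
/-- `NotLarger w S` is the number of nonempty suffixes of `w` that are lexicographically `⪯ S`.
The nonempty suffixes of `w` are `w.drop t` for `0 ≤ t < |w|`. -/
noncomputable def NotLarger (w S : List α) : ℕ :=
  ((Finset.range w.length).filter fun t => ¬ List.Lex (· < ·) S (w.drop t)).card

/-!
Let `𝒮` be the set of suffixes of `T`, or any family in which each suffix of `w` has an extension.
For a suffix `sk` of `w`, `NotLarger w sk ≤ NotLarger w S` just means `sk ⪯ S`, so `S` is the least
member of `𝒮` that is `⪰ sk`. If `u` is a suffix of `w` with `sk ⪯ u ⪯ S`, then some `S'` in `𝒮`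
extends `u`, hence `sk ⪯ u ⪯ S'` and minimality squeezes `u ⪯ S ⪯ S'`. The extensions of `u` form a
convex set for the lexicographic order containing `u` and `S'`, so `u` is a prefix of `S`. Taking
`u = sk` gives the first claim; for the count, `k' - k` is the number of suffixes `u` with
`sk ≺ u ⪯ S`, and prefixes of `S` are ordered by length.
-/

-- `List.IsPrefix.le` is about core's `≤` on lists, not the `≤` of the linear order.
theorem le_of_prefix {a b : List α} (h : a <+: b) : a ≤ b :=
  not_lt.mp h.le

theorem prefix_of_le_of_le {a b c : List α} (hac : a <+: c) (hab : a ≤ b) (hbc : b ≤ c) :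
    a <+: b := by
  induction a generalizing b c with
  | nil => exact List.nil_prefix
  | cons x a ih =>
    obtain ⟨c, rfl, htail⟩ := List.cons_prefix_iff.mp hac
    cases b with
    | nil => exact absurd (List.nil_lt_cons x a) hab.not_gt
    | cons y b =>
      simp only [← not_lt, List.cons_lt_cons_iff, not_or, not_and] at hab hbc
      obtain rfl : x = y := le_antisymm (not_lt.mp hab.1) (not_lt.mp hbc.1)
      exact List.cons_prefix_cons.mpr
        ⟨rfl, ih htail (not_lt.mp (hab.2 rfl)) (not_lt.mp (hbc.2 rfl))⟩

theorem le_iff_length_le_of_prefix {a b c : List α} (ha : a <+: c) (hb : b <+: c) :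
    a ≤ b ↔ a.length ≤ b.length :=
  ⟨fun hab => (prefix_of_le_of_le ha hab (le_of_prefix hb)).length_le,
    fun hlen => le_of_prefix (List.prefix_of_prefix_length_le ha hb hlen)⟩

theorem lt_iff_length_lt_of_prefix {a b c : List α} (ha : a <+: c) (hb : b <+: c) :
    a < b ↔ a.length < b.length := by
  simpa only [not_le] using not_congr (le_iff_length_le_of_prefix hb ha)

theorem prefix_of_mem_lowerBounds {𝒮 : Set (List α)} {v u S S' : List α}
    (hS : S ∈ lowerBounds {x ∈ 𝒮 | v ≤ x}) (hvu : v ≤ u) (huS : u ≤ S) (hS' : S' ∈ 𝒮)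
    (huS' : u <+: S') : u <+: S :=
  prefix_of_le_of_le huS' huS (hS ⟨hS', hvu.trans (le_of_prefix huS')⟩)

open Classical in
theorem notLarger_eq_card_filter_le (w S : List α) :
    NotLarger w S = ((Finset.range w.length).filter fun t => w.drop t ≤ S).card := by
  simp only [NotLarger, List.lex_lt, not_lt]

theorem notLarger_mono (w : List α) : Monotone (NotLarger w) := by
  classical
  intro S S' hSS'
  simp only [notLarger_eq_card_filter_le]
  exact Finset.card_le_card (Finset.monotone_filter_right _ fun _ _ ht => ht.trans hSS')

theorem notLarger_lt_of_lt_suffix {w u S : List α} (hu : u <:+ w) (hSu : S < u) :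
    NotLarger w S < NotLarger w u := by
  classical
  simp only [notLarger_eq_card_filter_le]
  obtain ⟨v, rfl⟩ := hu
  have hpos : 0 < u.length := List.length_pos_of_ne_nil (by rintro rfl; exact List.not_lt_nil S hSu)
  refine Finset.card_lt_card (Finset.ssubset_iff_of_subset
    (Finset.monotone_filter_right _ fun _ _ ht => ht.trans hSu.le) |>.mpr ⟨v.length, ?_, ?_⟩)
  · simpa using hpos
  · simpa using fun _ => hSu

theorem notLarger_le_notLarger_iff {w u S : List α} (hu : u <:+ w) :
    NotLarger w u ≤ NotLarger w S ↔ u ≤ S :=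
  ⟨fun h => not_lt.mp fun hSu => (notLarger_lt_of_lt_suffix hu hSu).not_ge h,
    fun h => notLarger_mono w h⟩

open Classical in
theorem notLarger_sub_notLarger (w : List α) {u S : List α} (huS : u ≤ S) :
    NotLarger w S - NotLarger w u =
      ((Finset.range w.length).filter fun t => w.drop t ≤ S ∧ u < w.drop t).card := by
  simp only [notLarger_eq_card_filter_le]
  rw [← Finset.card_sdiff_of_subset
    (Finset.monotone_filter_right _ fun _ _ ht => ht.trans huS)]
  congr 1
  grind

theorem substr_infix {β : Type*} (T : List β) (i j : ℕ) : substr T i j <:+: T :=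
  (List.take_prefix _ _).isInfix.trans (List.drop_suffix _ _).isInfix

open Classical in
theorem stmt_14_general {𝒮 : Set (List α)} {w sk : List α}
    (h𝒮 : ∀ u, u <:+ w → ∃ S ∈ 𝒮, u <+: S) (hsk : sk <:+ w) :
    (∃ S ∈ 𝒮, NotLarger w sk ≤ NotLarger w S) ∧
    ∀ S, IsLeast {S' ∈ 𝒮 | NotLarger w sk ≤ NotLarger w S'} S →
      sk <+: S ∧
      ((Finset.range w.length).filter
          fun t => w.drop t <+: S ∧ sk.length < (w.drop t).length).card
        = NotLarger w S - NotLarger w sk := by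
  simp only [notLarger_le_notLarger_iff hsk]
  refine ⟨(h𝒮 sk hsk).imp fun S hS => ⟨hS.1, le_of_prefix hS.2⟩, fun S hS => ?_⟩
  have prefix_of_le {u : List α} (hu : u <:+ w) (hsku : sk ≤ u) (huS : u ≤ S) : u <+: S := by
    obtain ⟨S', hS', huS'⟩ := h𝒮 u hu
    exact prefix_of_mem_lowerBounds hS.2 hsku huS hS' huS'
  have hskS : sk <+: S := prefix_of_le hsk le_rfl hS.1.2
  refine ⟨hskS, ?_⟩
  rw [notLarger_sub_notLarger w hS.1.2]
  refine congrArg Finset.card (Finset.filter_congr fun t _ => ⟨?_, ?_⟩)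
  · rintro ⟨hpre, hlen⟩
    exact ⟨le_of_prefix hpre, (lt_iff_length_lt_of_prefix hskS hpre).mpr hlen⟩
  · rintro ⟨hle, hlt⟩
    have hpre : w.drop t <+: S := prefix_of_le (List.drop_suffix t w) hlt.le hle
    exact ⟨hpre, (lt_iff_length_lt_of_prefix hskS hpre).mp hlt⟩

open Classical in
/-- Let `w = T[i..j]` be a nonempty substring of `T` and `1 ≤ k ≤ |w|`; let `sk` be the `k`-th
smallest nonempty suffix of `w` (characterized by: `sk` is a nonempty suffix of `w` with
`NotLarger w sk = k`).  Then some suffix `S` of `T` has `NotLarger w S ≥ k`; and if `S` is the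
lexicographically minimal suffix of `T` with `k' = NotLarger w S ≥ k`, then `sk` is a prefix of
`S` and exactly `k' - k` nonempty suffixes of `w` are prefixes of `S` longer than `sk`. -/
theorem stmt_14 (T : List α) (i j k : ℕ) (w sk : List α)
    (hw : w = substr T i j) (hwne : w ≠ [])
    (hk1 : 1 ≤ k) (hk2 : k ≤ w.length)
    (hsk1 : sk ≠ []) (hsk2 : sk <:+ w) (hsk3 : NotLarger w sk = k) :
    (∃ S, S <:+ T ∧ k ≤ NotLarger w S) ∧
    ∀ S, S <:+ T → k ≤ NotLarger w S →
      (∀ S', S' <:+ T → k ≤ NotLarger w S' → ¬ List.Lex (· < ·) S' S) →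
      sk <+: S ∧
      ((Finset.range w.length).filter
          fun t => (w.drop t) <+: S ∧ sk.length < (w.drop t).length).card
        = NotLarger w S - k := by
  have h𝒮 (u : List α) (hu : u <:+ w) : ∃ S, S <:+ T ∧ u <+: S :=
    (List.infix_iff_prefix_suffix.mp (hu.isInfix.trans (hw ▸ substr_infix T i j))).imp
      fun _ => And.symm
  obtain ⟨hex, hleast⟩ := stmt_14_general (𝒮 := {S | S <:+ T}) h𝒮 hsk2
  subst hsk3
  exact ⟨hex, fun S hST hkS hmin =>
    hleast S ⟨⟨hST, hkS⟩, fun S' hS' => not_lt.mp (hmin S' hS'.1 hS'.2)⟩⟩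
end

section
/- Let ρ be a nonempty string that is not a prefix of the string y, let x be any string, and let k ≥ 1 be an integer. Then y ≺ ρ^k x if and only if y ≺ ρ. -/
variable {α : Type*} [LinearOrder α]

section ArbitraryRelation

variable {β : Type*} {r : β → β → Prop} {u v w : List β}

theorem lex_or_prefix_of_lex_append (h : List.Lex r u (v ++ w)) : List.Lex r u v ∨ v <+: u := by
  induction v generalizing u with
  | nil => exact .inr List.nil_prefix
  | cons b v ih =>
    cases h with
    | nil => exact .inl .nil
    | rel hab => exact .inl (.rel hab)
    | cons htail => exact (ih htail).imp .cons (List.prefix_cons_inj b).2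

theorem lex_iff_lex_of_prefix (hvw : v <+: w) (hvu : ¬ v <+: u) :
    List.Lex r u w ↔ List.Lex r u v := by
  obtain ⟨t, rfl⟩ := hvw
  exact ⟨fun h => (lex_or_prefix_of_lex_append h).resolve_right hvu, fun h => h.append_right r t⟩

theorem prefix_lrep (w : List β) {k : ℕ} (hk : k ≠ 0) : w <+: lrep w k := by
  obtain ⟨n, rfl⟩ := Nat.exists_eq_succ_of_ne_zero hk
  change w <+: w ++ lrep w n
  exact List.prefix_append w (lrep w n)

theorem stmt_17_general (r : β → β → Prop) (ρ y x : List β) (k : ℕ)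
    (hnp : ¬ ρ <+: y) (hk : 1 ≤ k) :
    List.Lex r y (lrep ρ k ++ x) ↔ List.Lex r y ρ :=
  lex_iff_lex_of_prefix ((prefix_lrep ρ (Nat.one_le_iff_ne_zero.1 hk)).trans
    (List.prefix_append (lrep ρ k) x)) hnp

end ArbitraryRelation

/-- Let `ρ` be a nonempty string that is not a prefix of `y`, let `x` be any string, and
`k ≥ 1`.  Then `y ≺ ρ^k x` if and only if `y ≺ ρ`. -/
theorem stmt_17 (ρ y x : List α) (k : ℕ)
    (hρ : ρ ≠ []) (hnp : ¬ ρ <+: y) (hk : 1 ≤ k) :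
    List.Lex (· < ·) y (lrep ρ k ++ x) ↔ List.Lex (· < ·) y ρ :=
  stmt_17_general (· < ·) ρ y x k hnp hk
end
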